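/- Let d ≥ 3 be a fixed integer. There exists δ₀ > 0 such that for every δ ∈ (0, δ₀) there exists a constant c(δ) > 0 with the following property: for every prime p with gcd(p,d) = 1 and every vector 𝔫 = (𝔫_0,…,𝔫_{p−1}) ∈ ℝ^p with 𝔫_j ≥ 0 and Σ_j 𝔫_j = 1, if max_{0≤j≤p−1} |𝔫_j − 1/p| > δ/p and 𝔫_0 < 1 − δ/p, then Σ_{(a_1,…,a_d) ∈ Z_{d,p}} ∏_{r=1}^{d} 𝔫_{a_r}^{(d−1)/d} ≤ 1 − c(δ)/p. -/

import Mathlib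

open Finset

/-!
Write `𝔫 = f ^ 2`. By AM-GM the summand at `a` is at most the average over `s` of the products
`∏ r ≠ s, f (a r) ^ 2`, and each of those sums to `1` over the zero-sum tuples. Retaining the gain
`(f (a 0) - f (a 1)) ^ 2` that AM-GM has from two of the factors shows that the power sum falls
short of `1` by at least `1 / d` times the mean of `∑ x, (f x - f (s - x)) ^ 2` over the
reflections `x ↦ s - x`, where `-s` is a sum of `d - 2` independent residues of law `𝔫`.

Suppose that this mean is small. Two reflections compose to a translation, so `f` is nearly
invariant under translation by `y - x` for most independent `x`, `y` of law `𝔫`. If `0` is the only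
almost period of `f`, then `𝔫` is concentrated at a point `x`. For `x ≠ 0` this is impossible, since
`a ↦ -(d - 2) x - a` moves `x` by coprimality of `p` and `d`; for `x = 0` it is limited by the bound
on `𝔫 0`. Otherwise the almost periods carry most of the mass of `𝔫` while being too few to grow
under addition as the Cauchy–Davenport theorem demands, unless every residue is an almost period;
then `f` is close to uniform.
-/

section GeometricMean

variable {ι : Type*} [Fintype ι]

lemma prod_rpow_le_sum_mul_sub_sq_sqrt_sub_sqrt {w x : ι → ℝ} (hw : ∀ k, 0 ≤ w k)
    (hw1 : ∑ k, w k = 1) (hx : ∀ k, 0 ≤ x k) {i j : ι} (hij : i ≠ j) (hwij : w i = w j) :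
    ∏ k, x k ^ w k ≤ ∑ k, w k * x k - w i * (√(x i) - √(x j)) ^ 2 := by
  classical
  set q := √(x i) * √(x j) with hq
  have hq0 : 0 ≤ q := by positivity
  -- Replacing `x i` and `x j` by their geometric mean keeps the product and lowers the sum.
  let z : ι → ℝ := fun k => if k ∈ ({i, j} : Finset ι) then q else x k
  have hz : ∀ k, 0 ≤ z k := fun k => by dsimp only [z]; split_ifs <;> simp [hq0, hx]
  have hzi : z i = q := by simp [z]
  have hzj : z j = q := by simp [z]
  have hzk : ∀ k ∈ ({i, j} : Finset ι)ᶜ, z k = x k := fun k hk => if_neg (mem_compl.mp hk)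
  have hqq : q * q = x i * x j := by
    rw [hq, mul_mul_mul_comm, Real.mul_self_sqrt (hx i), Real.mul_self_sqrt (hx j)]
  have hprod : ∏ k, z k ^ w k = ∏ k, x k ^ w k := by
    rw [← prod_compl_mul_prod {i, j}, ← prod_compl_mul_prod {i, j}, prod_pair hij, prod_pair hij,
      hzi, hzj, ← hwij, ← Real.mul_rpow hq0 hq0, hqq, Real.mul_rpow (hx i) (hx j),
      prod_congr rfl fun k hk => by rw [hzk k hk]]
  have hsum : ∑ k, w k * z k = ∑ k, w k * x k - w i * (√(x i) - √(x j)) ^ 2 := by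
    rw [← sum_compl_add_sum {i, j}, ← sum_compl_add_sum {i, j}, sum_pair hij, sum_pair hij,
      hzi, hzj, ← hwij, sum_congr rfl fun k hk => by rw [hzk k hk], sub_sq, Real.sq_sqrt (hx i),
      Real.sq_sqrt (hx j)]
    ring
  rw [← hprod, ← hsum]
  exact Real.geom_mean_le_arith_mean_weighted univ w z (fun k _ => hw k) hw1 fun k _ => hz k

variable [DecidableEq ι]

lemma prod_rpow_card_sub_one_div_card {x : ι → ℝ} (hx : ∀ i, 0 ≤ x i) :
    ∏ i, x i ^ (((Fintype.card ι : ℝ) - 1) / Fintype.card ι) =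
      ∏ s, (∏ i ∈ {s}ᶜ, x i) ^ (1 / (Fintype.card ι : ℝ)) := by
  simp_rw [← Real.finsetProd_rpow _ x fun i _ => hx i]
  rw [prod_comm' (t' := univ) (s' := fun i => {i}ᶜ) fun s i => by simp [eq_comm]]
  refine prod_congr rfl fun i _ => ?_
  have hcard : 1 ≤ Fintype.card ι := Fintype.card_pos_iff.mpr ⟨i⟩
  rw [prod_const, card_compl, card_singleton, ← Real.rpow_natCast, ← Real.rpow_mul (hx i),
    Nat.cast_sub hcard, Nat.cast_one, one_div_mul_eq_div]

lemma prod_sq_rpow_le {f : ι → ℝ} (hf : ∀ i, 0 ≤ f i) {i j : ι} (hij : i ≠ j) :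
    ∏ k, (f k ^ 2) ^ (((Fintype.card ι : ℝ) - 1) / Fintype.card ι) ≤
      (∑ s, ∏ k ∈ {s}ᶜ, f k ^ 2 - (∏ k ∈ {i, j}ᶜ, f k ^ 2) * (f i - f j) ^ 2) /
        Fintype.card ι := by
  have : Nonempty ι := ⟨i⟩
  have hprod_compl : ∀ {a b : ι}, a ≠ b →
      ∏ k ∈ {a}ᶜ, f k ^ 2 = f b ^ 2 * ∏ k ∈ {a, b}ᶜ, f k ^ 2 := fun {a b} hab => by
    rw [← mul_prod_erase _ _ (show b ∈ ({a}ᶜ : Finset ι) by simpa using hab.symm), pair_comm,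
      compl_insert]
  have hsqrt : ∀ {a b : ι}, a ≠ b →
      √(∏ k ∈ {a}ᶜ, f k ^ 2) = f b * √(∏ k ∈ {a, b}ᶜ, f k ^ 2) := fun {a b} hab => by
    rw [hprod_compl hab, Real.sqrt_mul (sq_nonneg _), Real.sqrt_sq (hf b)]
  have hnonneg : ∀ t : Finset ι, 0 ≤ ∏ k ∈ t, f k ^ 2 := fun t =>
    prod_nonneg fun _ _ => sq_nonneg _
  rw [prod_rpow_card_sub_one_div_card fun k => sq_nonneg (f k)]
  refine (prod_rpow_le_sum_mul_sub_sq_sqrt_sub_sqrt (fun _ => by positivity) (by simp)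
    (fun s => hnonneg {s}ᶜ) hij rfl).trans_eq ?_
  rw [hsqrt hij, hsqrt hij.symm, pair_comm j i, ← sub_mul, mul_pow, Real.sq_sqrt (hnonneg _),
    ← mul_sum]
  ring

end GeometricMean

section ZeroSum

lemma prod_compl_singleton_eq_prod_succAbove {M : Type*} [CommMonoid M] {m : ℕ}
    (x : Fin (m + 1) → M) (s : Fin (m + 1)) :
    ∏ i ∈ {s}ᶜ, x i = ∏ i : Fin m, x (s.succAbove i) := by
  rw [← Fin.image_succAbove_univ, prod_image Fin.succAbove_right_injective.injOn]

lemma prod_compl_zero_one_eq_prod_succ_succ {M : Type*} [CommMonoid M] {m : ℕ}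
    (x : Fin (m + 2) → M) : ∏ i ∈ {0, 1}ᶜ, x i = ∏ i : Fin m, x i.succ.succ := by
  have himage : ({0, 1}ᶜ : Finset (Fin (m + 2))) = univ.image fun i : Fin m => i.succ.succ := by
    ext i
    refine i.cases (by simp) fun j => j.cases ?_ ?_ <;> simp [Fin.ext_iff]
  rw [himage, prod_image fun _ _ _ _ h => Fin.succ_injective _ (Fin.succ_injective _ h)]

lemma sum_fin_succ_eq_sum_cons {G M : Type*} [Fintype G] [AddCommMonoid M] {m : ℕ}
    (F : (Fin (m + 1) → G) → M) :
    ∑ a, F a = ∑ c : Fin m → G, ∑ y, F (Fin.cons y c) := by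
  rw [← (Fin.consEquiv fun _ => G).sum_comp, Fintype.sum_prod_type_right]
  rfl

variable {G : Type*} [AddCommGroup G] [Fintype G] [DecidableEq G]

lemma sum_zeroSum_eq_sum_insertNth {M : Type*} [AddCommMonoid M] {m : ℕ} (s : Fin (m + 1))
    (F : (Fin (m + 1) → G) → M) :
    ∑ a with ∑ r, a r = 0, F a = ∑ b, F (s.insertNth (-∑ i, b i) b) := by
  have insertNth_removeNth {a : Fin (m + 1) → G} (ha : ∑ r, a r = 0) :
      s.insertNth (-∑ i, s.removeNth a i) (s.removeNth a) = a := by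
    have hsplit : a s + ∑ i, s.removeNth a i = 0 := (Fin.sum_univ_succAbove a s).symm.trans ha
    rw [← eq_neg_of_add_eq_zero_left hsplit, Fin.insertNth_self_removeNth]
  refine sum_nbij' s.removeNth (fun b => s.insertNth (-∑ i, b i) b) (fun _ _ => mem_univ _)
    (fun b _ => by simp [Fin.sum_univ_succAbove _ s])
    (fun a ha => insertNth_removeNth (by simpa using ha)) (fun b _ => by simp)
    fun a ha => by rw [insertNth_removeNth (by simpa using ha)]

lemma sum_zeroSum_prod_compl_singleton {R : Type*} [CommSemiring R] {m : ℕ} (n : G → R)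
    (s : Fin (m + 1)) :
    ∑ a : Fin (m + 1) → G with ∑ r, a r = 0, ∏ r ∈ {s}ᶜ, n (a r) = (∑ x, n x) ^ m := by
  rw [sum_zeroSum_eq_sum_insertNth s]
  simp only [prod_compl_singleton_eq_prod_succAbove, Fin.insertNth_apply_succAbove, Fintype.sum_pow]

end ZeroSum

section Defects

lemma sub_sq_le_two_mul_add (a b c : ℝ) : (a - c) ^ 2 ≤ 2 * (a - b) ^ 2 + 2 * (b - c) ^ 2 := by
  calc (a - c) ^ 2 = ((a - b) + (b - c)) ^ 2 := by ring
    _ ≤ 2 * ((a - b) ^ 2 + (b - c) ^ 2) := add_sq_le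
    _ = _ := by ring

lemma mul_min_one_le_nine_mul_sq_sub_one {y δ : ℝ} (hy : 0 ≤ y) (hδ : 0 ≤ δ)
    (hδy : δ ≤ |y ^ 2 - 1|) : δ * min δ 1 ≤ 9 * (y - 1) ^ 2 := by
  have hfactor : |y ^ 2 - 1| = |y - 1| * (y + 1) := by
    rw [← one_pow 2, sq_sub_sq, abs_mul, mul_comm, abs_of_nonneg (by linarith : 0 ≤ y + 1), one_pow]
  rw [hfactor] at hδy
  rcases le_total 2 y with hy2 | hy2
  · have hδle : δ ≤ (y - 1) * (y + 1) := by rwa [abs_of_nonneg (by linarith)] at hδy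
    calc δ * min δ 1 ≤ δ * 1 := by gcongr; exact min_le_right _ _
      _ ≤ 9 * (y - 1) ^ 2 := by nlinarith
  · have hδle : δ ≤ 3 * |y - 1| :=
      hδy.trans <| by rw [mul_comm]; gcongr; linarith
    calc δ * min δ 1 ≤ δ * δ := by gcongr; exact min_le_left _ _
      _ ≤ (3 * |y - 1|) * (3 * |y - 1|) := by gcongr
      _ = 9 * (y - 1) ^ 2 := by rw [mul_mul_mul_comm, abs_mul_abs_self]; ring

variable {G : Type*} [AddCommGroup G] [Fintype G] (f : G → ℝ)

/-- The squared `ℓ²` distance between `f` and its translate by `t`: it measures how far `t` is from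
being a period of `f`. -/
noncomputable def translationDefect (t : G) : ℝ := ∑ a, (f a - f (a + t)) ^ 2

/-- The squared `ℓ²` distance between `f` and its composition with the reflection `a ↦ s - a`. -/
noncomputable def reflectionDefect (s : G) : ℝ := ∑ a, (f a - f (s - a)) ^ 2

/-- The expectation of the translation defect at `y - x` for independent `x`, `y` of law `f ^ 2`,
when that is a probability vector. -/
noncomputable def meanTranslationDefect : ℝ :=
  ∑ x, f x ^ 2 * ∑ y, f y ^ 2 * translationDefect f (y - x)

/-- The expectation of the reflection defect at `-∑ i, c i` for `m` independent points `c i` of law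
`f ^ 2`, when that is a probability vector. This is the gain in AM-GM over the zero-sum tuples of
length `m + 2`: `c` holds all entries but the first two, which the reflection exchanges. -/
noncomputable def meanReflectionDefect (m : ℕ) : ℝ :=
  ∑ c : Fin m → G, (∏ i, f (c i) ^ 2) * reflectionDefect f (-∑ i, c i)

lemma translationDefect_nonneg (t : G) : 0 ≤ translationDefect f t :=
  sum_nonneg fun _ _ => sq_nonneg _

lemma reflectionDefect_nonneg (s : G) : 0 ≤ reflectionDefect f s :=
  sum_nonneg fun _ _ => sq_nonneg _

lemma meanReflectionDefect_nonneg (m : ℕ) : 0 ≤ meanReflectionDefect f m :=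
  sum_nonneg fun _ _ =>
    mul_nonneg (prod_nonneg fun _ _ => sq_nonneg _) (reflectionDefect_nonneg f _)

lemma translationDefect_zero : translationDefect f 0 = 0 := by simp [translationDefect]

lemma translationDefect_add_le (s t : G) :
    translationDefect f (s + t) ≤ 2 * translationDefect f s + 2 * translationDefect f t := by
  have htranslate : translationDefect f t = ∑ a, (f (a + s) - f (a + (s + t))) ^ 2 := by
    rw [translationDefect, ← Equiv.sum_comp (Equiv.addRight s)]
    simp only [Equiv.coe_addRight, add_assoc]
  rw [htranslate, translationDefect, translationDefect, mul_sum, mul_sum, ← sum_add_distrib]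
  exact sum_le_sum fun a _ => sub_sq_le_two_mul_add _ _ _

lemma translationDefect_sub_le (s t : G) :
    translationDefect f (s - t) ≤ 2 * reflectionDefect f s + 2 * reflectionDefect f t := by
  have hreflect : translationDefect f (s - t) = ∑ a, (f (s - a) - f (t - a)) ^ 2 := by
    rw [translationDefect, ← (Equiv.subLeft t).sum_comp]
    refine sum_congr rfl fun a _ => ?_
    rw [Equiv.subLeft_apply, sub_add_sub_cancel', sub_sq_comm]
  rw [hreflect, reflectionDefect, reflectionDefect, mul_sum, mul_sum, ← sum_add_distrib]
  refine sum_le_sum fun a _ => ?_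
  rw [sub_sq_comm (f a) (f (s - a))]
  exact sub_sq_le_two_mul_add _ _ _

variable {f}

lemma sum_zeroSum_prod_rpow_le [DecidableEq G] (hf : ∀ a, 0 ≤ f a) (h1 : ∑ a, f a ^ 2 = 1) (m : ℕ) :
    ∑ a : Fin (m + 2) → G with ∑ r, a r = 0,
        ∏ r, (f (a r) ^ 2) ^ (((m + 2 : ℕ) - 1 : ℝ) / (m + 2 : ℕ)) ≤
      1 - meanReflectionDefect f m / (m + 2 : ℕ) := by
  have hremoved : ∑ a : Fin (m + 2) → G with ∑ r, a r = 0,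
      (∏ r ∈ {0, 1}ᶜ, f (a r) ^ 2) * (f (a 0) - f (a 1)) ^ 2 = meanReflectionDefect f m := by
    simp_rw [sum_zeroSum_eq_sum_insertNth 0, sum_fin_succ_eq_sum_cons,
      prod_compl_zero_one_eq_prod_succ_succ, meanReflectionDefect, reflectionDefect, mul_sum]
    refine sum_congr rfl fun c _ => sum_congr rfl fun y _ => ?_
    rw [Fin.insertNth_zero', ← Fin.succ_zero_eq_one, sub_sq_comm]
    simp only [Fin.cons_zero, Fin.cons_succ, Fin.sum_univ_succ, neg_add_rev, ← sub_eq_add_neg]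
  calc _ ≤ ∑ a : Fin (m + 2) → G with ∑ r, a r = 0,
        (∑ s, ∏ r ∈ {s}ᶜ, f (a r) ^ 2 -
          (∏ r ∈ {0, 1}ᶜ, f (a r) ^ 2) * (f (a 0) - f (a 1)) ^ 2) / (m + 2 : ℕ) :=
        sum_le_sum fun a _ => by
          simpa using prod_sq_rpow_le (fun r => hf (a r)) (zero_ne_one (α := Fin (m + 2)))
    _ = 1 - meanReflectionDefect f m / (m + 2 : ℕ) := by
      rw [← sum_div, sum_sub_distrib, sum_comm, hremoved,
        sum_congr rfl fun s _ => sum_zeroSum_prod_compl_singleton (fun x => f x ^ 2) s, h1,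
        one_pow, sum_const, card_univ, Fintype.card_fin, nsmul_one, sub_div,
        div_self (by positivity)]

lemma meanReflectionDefect_succ (m : ℕ) :
    meanReflectionDefect f (m + 1) =
      ∑ c : Fin m → G, (∏ i, f (c i) ^ 2) * ∑ y, f y ^ 2 * reflectionDefect f (-∑ i, c i - y) := by
  simp_rw [meanReflectionDefect, sum_fin_succ_eq_sum_cons, mul_sum]
  refine sum_congr rfl fun c _ => sum_congr rfl fun y _ => ?_
  simp only [Fin.prod_univ_succ, Fin.sum_univ_succ, Fin.cons_zero, Fin.cons_succ, neg_add_rev,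
    ← sub_eq_add_neg]
  ring

lemma meanTranslationDefect_le_sum_mul_reflectionDefect (h1 : ∑ a, f a ^ 2 = 1) (s : G) :
    meanTranslationDefect f ≤ 4 * ∑ y, f y ^ 2 * reflectionDefect f (s - y) := by
  set R := ∑ y, f y ^ 2 * reflectionDefect f (s - y) with hR
  have htriangle (x y : G) : translationDefect f (y - x) ≤
      2 * reflectionDefect f (s - x) + 2 * reflectionDefect f (s - y) := by
    simpa using translationDefect_sub_le f (s - x) (s - y)
  calc meanTranslationDefect f
      ≤ ∑ x, f x ^ 2 * ∑ y, f y ^ 2 *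
          (2 * reflectionDefect f (s - x) + 2 * reflectionDefect f (s - y)) := by
        unfold meanTranslationDefect
        gcongr with x _ y _
        exact htriangle x y
    _ = ∑ x, f x ^ 2 * (2 * reflectionDefect f (s - x) + 2 * R) := by
        refine sum_congr rfl fun x _ => ?_
        simp_rw [mul_add (f _ ^ 2), sum_add_distrib, ← sum_mul, h1, mul_left_comm _ (2 : ℝ),
          ← mul_sum, one_mul, hR]
        ring
    _ = 4 * R := by
        simp_rw [mul_add, sum_add_distrib, ← sum_mul, h1, mul_left_comm _ (2 : ℝ), ← mul_sum]
        ring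

lemma meanTranslationDefect_le_four_mul (h1 : ∑ a, f a ^ 2 = 1) (m : ℕ) :
    meanTranslationDefect f ≤ 4 * meanReflectionDefect f (m + 1) := by
  have hweights : ∑ c : Fin m → G, ∏ i, f (c i) ^ 2 = 1 := by
    rw [← Fintype.sum_pow fun a => f a ^ 2, h1, one_pow]
  rw [meanReflectionDefect_succ, mul_sum, ← one_mul (meanTranslationDefect f), ← hweights, sum_mul]
  refine sum_le_sum fun c _ => ?_
  rw [mul_left_comm]
  exact mul_le_mul_of_nonneg_left (meanTranslationDefect_le_sum_mul_reflectionDefect h1 _)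
    (prod_nonneg fun _ _ => sq_nonneg _)

section AlmostPeriods

/-- The `ε`-almost periods of `f`, measured in squared `ℓ²` distance. -/
noncomputable def almostPeriods (f : G → ℝ) (ε : ℝ) : Finset G := {t | translationDefect f t ≤ ε}

lemma mem_almostPeriods {ε : ℝ} {t : G} : t ∈ almostPeriods f ε ↔ translationDefect f t ≤ ε := by
  simp [almostPeriods]

lemma zero_mem_almostPeriods {ε : ℝ} (hε : 0 ≤ ε) : 0 ∈ almostPeriods f ε := by
  rwa [mem_almostPeriods, translationDefect_zero]

open Pointwise in
lemma almostPeriods_add_subset [DecidableEq G] (ε : ℝ) :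
    almostPeriods f ε + almostPeriods f ε ⊆ almostPeriods f (4 * ε) := by
  intro t ht
  obtain ⟨u, hu, v, hv, rfl⟩ := mem_add.mp ht
  rw [mem_almostPeriods] at *
  linarith [translationDefect_add_le f u v]

lemma sum_sq_translate (f : G → ℝ) (t : G) : ∑ a, f (a + t) ^ 2 = ∑ a, f a ^ 2 :=
  Equiv.sum_comp (Equiv.addRight t) fun a => f a ^ 2

lemma sq_sum_abs_sq_sub_sq_le (f : G → ℝ) (t : G) :
    (∑ a, |f a ^ 2 - f (a + t) ^ 2|) ^ 2 ≤ 4 * (∑ a, f a ^ 2) * translationDefect f t := by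
  have hsum : ∑ a, (f a + f (a + t)) ^ 2 ≤ 4 * ∑ a, f a ^ 2 := by
    calc ∑ a, (f a + f (a + t)) ^ 2 ≤ ∑ a, 2 * (f a ^ 2 + f (a + t) ^ 2) :=
          sum_le_sum fun a _ => add_sq_le
      _ = 4 * ∑ a, f a ^ 2 := by
          rw [← mul_sum, sum_add_distrib, sum_sq_translate]
          ring
  calc (∑ a, |f a ^ 2 - f (a + t) ^ 2|) ^ 2
      = (∑ a, |f a + f (a + t)| * |f a - f (a + t)|) ^ 2 := by simp_rw [sq_sub_sq, abs_mul]
    _ ≤ (∑ a, (f a + f (a + t)) ^ 2) * translationDefect f t := by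
        simpa only [sq_abs, translationDefect] using sum_mul_sq_le_sq_mul_sq univ
          (fun a => |f a + f (a + t)|) fun a => |f a - f (a + t)|
    _ ≤ 4 * (∑ a, f a ^ 2) * translationDefect f t :=
        mul_le_mul_of_nonneg_right hsum (translationDefect_nonneg f t)

lemma sum_abs_sq_sub_sq_le (h1 : ∑ a, f a ^ 2 = 1) {r : ℝ} (hr : 0 ≤ r) {t : G}
    (ht : t ∈ almostPeriods f (r ^ 2)) : ∑ a, |f a ^ 2 - f (a + t) ^ 2| ≤ 2 * r := by
  refine le_of_sq_le_sq ?_ (by positivity)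
  calc (∑ a, |f a ^ 2 - f (a + t) ^ 2|) ^ 2 ≤ 4 * 1 * translationDefect f t :=
        h1 ▸ sq_sum_abs_sq_sub_sq_le f t
    _ ≤ 4 * 1 * r ^ 2 := by gcongr; exact mem_almostPeriods.mp ht
    _ = (2 * r) ^ 2 := by ring

lemma mul_card_almostPeriods_le_card (h1 : ∑ a, f a ^ 2 = 1) {r : ℝ} (hr : 0 ≤ r) (B : Finset G) :
    (∑ b ∈ B, f b ^ 2 - 2 * r) * #(almostPeriods f (r ^ 2)) ≤ #B := by
  have hmass : ∀ t ∈ almostPeriods f (r ^ 2),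
      ∑ b ∈ B, f b ^ 2 - 2 * r ≤ ∑ b ∈ B, f (b + t) ^ 2 := fun t ht => by
    rw [sub_le_comm, ← sum_sub_distrib]
    calc ∑ b ∈ B, (f b ^ 2 - f (b + t) ^ 2) ≤ ∑ b ∈ B, |f b ^ 2 - f (b + t) ^ 2| :=
          sum_le_sum fun _ _ => le_abs_self _
      _ ≤ ∑ a, |f a ^ 2 - f (a + t) ^ 2| := sum_le_univ_sum_of_nonneg fun _ => abs_nonneg _
      _ ≤ 2 * r := sum_abs_sq_sub_sq_le h1 hr ht
  calc (∑ b ∈ B, f b ^ 2 - 2 * r) * #(almostPeriods f (r ^ 2))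
      ≤ ∑ t ∈ almostPeriods f (r ^ 2), ∑ b ∈ B, f (b + t) ^ 2 := by
        rw [mul_comm, ← nsmul_eq_mul]
        exact card_nsmul_le_sum _ _ _ hmass
    _ = ∑ b ∈ B, ∑ t ∈ almostPeriods f (r ^ 2), f (b + t) ^ 2 := sum_comm
    _ ≤ ∑ b ∈ B, ∑ t, f (b + t) ^ 2 :=
        sum_le_sum fun b _ => sum_le_univ_sum_of_nonneg fun _ => sq_nonneg _
    _ = #B := by
        have htotal (b : G) : ∑ t, f (b + t) ^ 2 = 1 :=
          (Equiv.sum_comp (Equiv.addLeft b) fun a => f a ^ 2).trans h1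
        simp [htotal]

lemma mul_one_sub_sum_almostPeriods_le (h1 : ∑ a, f a ^ 2 = 1) (ε : ℝ) (x : G) :
    ε * (1 - ∑ t ∈ almostPeriods f ε, f (x + t) ^ 2) ≤
      ∑ y, f y ^ 2 * translationDefect f (y - x) := by
  classical
  have hcompl : 1 - ∑ t ∈ almostPeriods f ε, f (x + t) ^ 2 =
      ∑ t ∈ (almostPeriods f ε)ᶜ, f (x + t) ^ 2 := by
    rw [sub_eq_iff_eq_add, sum_compl_add_sum, ← h1]
    exact (Equiv.sum_comp (Equiv.addLeft x) fun a => f a ^ 2).symm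
  calc ε * (1 - ∑ t ∈ almostPeriods f ε, f (x + t) ^ 2)
      ≤ ∑ t ∈ (almostPeriods f ε)ᶜ, f (x + t) ^ 2 * translationDefect f t := by
        rw [hcompl, mul_comm, sum_mul]
        gcongr with t ht
        rw [mem_compl, mem_almostPeriods, not_le] at ht
        exact ht.le
    _ ≤ ∑ t, f (x + t) ^ 2 * translationDefect f t := sum_le_univ_sum_of_nonneg fun t =>
        mul_nonneg (sq_nonneg _) (translationDefect_nonneg f t)
    _ = ∑ y, f y ^ 2 * translationDefect f (y - x) := by
        rw [← Equiv.sum_comp (Equiv.addLeft x) fun y => f y ^ 2 * translationDefect f (y - x)]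
        simp only [Equiv.coe_addLeft, add_sub_cancel_left]

lemma exists_sum_mul_translationDefect_le (h1 : ∑ a, f a ^ 2 = 1) :
    ∃ x, ∑ y, f y ^ 2 * translationDefect f (y - x) ≤ meanTranslationDefect f := by
  by_contra! hlt
  have hmem := (convex_Ioi (meanTranslationDefect f)).sum_mem (fun x _ => sq_nonneg (f x)) h1
    fun x _ => hlt x
  exact (Set.mem_Ioi.mp hmem).false

end AlmostPeriods

section Uniform

lemma card_mul_translationDefect_le (f : G → ℝ) (t : G) :
    Fintype.card G * translationDefect f t ≤ 4 * ∑ s, translationDefect f s := by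
  calc Fintype.card G * translationDefect f t
      = ∑ s : G, translationDefect f (s + (t - s)) := by simp
    _ ≤ ∑ s, (2 * translationDefect f s + 2 * translationDefect f (t - s)) :=
        sum_le_sum fun s _ => translationDefect_add_le f s (t - s)
    _ = 4 * ∑ s, translationDefect f s := by
        have hreflect : ∑ s, translationDefect f (t - s) = ∑ s, translationDefect f s :=
          Equiv.sum_comp (Equiv.subLeft t) (translationDefect f)
        rw [sum_add_distrib, ← mul_sum, ← mul_sum, hreflect]
        ring

lemma sum_sq_translate_mul_le (h1 : ∑ a, f a ^ 2 = 1) {r : ℝ} (hr : 0 ≤ r) {s : G}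
    (hs : s ∈ almostPeriods f (r ^ 2)) {K : G → ℝ} {M : ℝ} (hK0 : ∀ y, 0 ≤ K y)
    (hKM : ∀ y, K y ≤ M) :
    ∑ y, f (y + s) ^ 2 * K y ≤ ∑ y, f y ^ 2 * K y + 2 * r * M := by
  rw [← sub_le_iff_le_add', ← sum_sub_distrib]
  calc ∑ y, (f (y + s) ^ 2 * K y - f y ^ 2 * K y) ≤ ∑ y, |f y ^ 2 - f (y + s) ^ 2| * M := by
        refine sum_le_sum fun y _ => ?_
        rw [← sub_mul]
        gcongr
        · exact hK0 y
        · exact (le_abs_self _).trans_eq (abs_sub_comm _ _)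
        · exact hKM y
    _ ≤ 2 * r * M := by
        rw [← sum_mul]
        exact mul_le_mul_of_nonneg_right (sum_abs_sq_sub_sq_le h1 hr hs) ((hK0 0).trans (hKM 0))

lemma mul_sum_translationDefect_le_card_mul_sum (h1 : ∑ a, f a ^ 2 = 1) {r : ℝ} (hr : 0 ≤ r)
    (huniv : almostPeriods f (r ^ 2) = univ) (x : G) :
    (1 - 8 * r) * ∑ t, translationDefect f t ≤
      Fintype.card G * ∑ y, f y ^ 2 * translationDefect f (y - x) := by
  set S := ∑ t, translationDefect f t
  set T := ∑ y, f y ^ 2 * translationDefect f (y - x)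
  set N := (Fintype.card G : ℝ)
  have hNpos : 0 < N := Nat.cast_pos.mpr Fintype.card_pos
  have htranslate (s : G) : ∑ y, f (y + s) ^ 2 * translationDefect f (y - x) ≤
      T + 2 * r * (4 * S / N) :=
    sum_sq_translate_mul_le h1 hr (huniv ▸ mem_univ s) (fun y => translationDefect_nonneg f _)
      fun y => (le_div_iff₀' hNpos).mpr (card_mul_translationDefect_le f _)
  have haverage : ∑ s, ∑ y, f (y + s) ^ 2 * translationDefect f (y - x) = S := by
    have htotal (y : G) : ∑ s, f (y + s) ^ 2 = 1 :=
      (Equiv.sum_comp (Equiv.addLeft y) fun a => f a ^ 2).trans h1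
    rw [sum_comm]
    simp_rw [← sum_mul, htotal, one_mul]
    exact Equiv.sum_comp (Equiv.subRight x) (translationDefect f)
  have hsum : S ≤ N * T + 8 * r * S := by
    calc S = ∑ s, ∑ y, f (y + s) ^ 2 * translationDefect f (y - x) := haverage.symm
      _ ≤ ∑ _ : G, (T + 2 * r * (4 * S / N)) := sum_le_sum fun s _ => htranslate s
      _ = N * T + 8 * r * S := by
        rw [sum_const, card_univ, nsmul_eq_mul]
        field_simp
        ring
  linarith

lemma mul_sum_translationDefect_le_card_mul_mean (h1 : ∑ a, f a ^ 2 = 1) {r : ℝ} (hr : 0 ≤ r)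
    (huniv : almostPeriods f (r ^ 2) = univ) :
    (1 - 8 * r) * ∑ t, translationDefect f t ≤ Fintype.card G * meanTranslationDefect f := by
  have hmem := (convex_Ici ((1 - 8 * r) * ∑ t, translationDefect f t)).sum_mem
    (fun x _ => sq_nonneg (f x)) h1
    fun x _ => mul_sum_translationDefect_le_card_mul_sum h1 hr huniv x
  simpa only [meanTranslationDefect, Set.mem_Ici, smul_eq_mul, mul_sum, mul_left_comm] using hmem

lemma sq_sqrt_card_mul_sub_one_le (h1 : ∑ a, f a ^ 2 = 1) {j : G} (hj : 0 ≤ f j) :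
    (√(Fintype.card G) * f j - 1) ^ 2 ≤ ∑ t, translationDefect f t := by
  have hsum : ∑ b, f b ≤ √(Fintype.card G) := Real.le_sqrt_of_sq_le <| by
    simpa [h1] using sq_sum_le_card_mul_sum_sq (s := univ) (f := f)
  calc (√(Fintype.card G) * f j - 1) ^ 2
      = Fintype.card G * f j ^ 2 - 2 * f j * √(Fintype.card G) + 1 := by
        rw [sub_sq, mul_pow, Real.sq_sqrt (by positivity)]
        ring
    _ ≤ Fintype.card G * f j ^ 2 - 2 * f j * ∑ b, f b + 1 := by gcongr
    _ = ∑ b, (f j - f b) ^ 2 := by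
        simp [sub_sq, sum_add_distrib, sum_sub_distrib, ← mul_sum, h1]
    _ = ∑ t, (f j - f (j + t)) ^ 2 :=
        (Equiv.sum_comp (Equiv.addLeft j) fun b => (f j - f b) ^ 2).symm
    _ ≤ ∑ t, translationDefect f t := sum_le_sum fun t _ =>
        single_le_sum (f := fun a => (f a - f (a + t)) ^ 2) (fun _ _ => sq_nonneg _) (mem_univ j)

lemma mul_min_one_le_of_almostPeriods_eq_univ (h1 : ∑ a, f a ^ 2 = 1) {r : ℝ} (hr : 0 ≤ r)
    (hr8 : 8 * r ≤ 1) (huniv : almostPeriods f (r ^ 2) = univ) {j : G} (hfj : 0 ≤ f j) {δ : ℝ}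
    (hδ : 0 ≤ δ) (hj : δ ≤ |Fintype.card G * f j ^ 2 - 1|) :
    (1 - 8 * r) * (δ * min δ 1) ≤ 9 * (Fintype.card G * meanTranslationDefect f) := by
  have hdev : δ * min δ 1 ≤ 9 * (√(Fintype.card G) * f j - 1) ^ 2 :=
    mul_min_one_le_nine_mul_sq_sub_one (mul_nonneg (Real.sqrt_nonneg _) hfj) hδ
      (by rwa [mul_pow, Real.sq_sqrt (Nat.cast_nonneg _)])
  calc (1 - 8 * r) * (δ * min δ 1)
      ≤ (1 - 8 * r) * (9 * ∑ t, translationDefect f t) := by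
        refine mul_le_mul_of_nonneg_left (hdev.trans ?_) (sub_nonneg.mpr hr8)
        gcongr
        exact sq_sqrt_card_mul_sub_one_le h1 hfj
    _ = 9 * ((1 - 8 * r) * ∑ t, translationDefect f t) := mul_left_comm _ _ _
    _ ≤ 9 * (Fintype.card G * meanTranslationDefect f) :=
        mul_le_mul_of_nonneg_left (mul_sum_translationDefect_le_card_mul_mean h1 hr huniv)
          (by norm_num)

end Uniform

section Concentrated

lemma pow_mul_sq_sub_le_meanReflectionDefect (f : G → ℝ) (m : ℕ) (x : G) :
    (f x ^ 2) ^ m * (f x - f (-((m + 1) • x))) ^ 2 ≤ meanReflectionDefect f m := by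
  have hreflect : (f x - f (-((m + 1) • x))) ^ 2 ≤ reflectionDefect f (-(m • x)) := by
    rw [succ_nsmul', neg_add_rev, ← sub_eq_add_neg]
    exact single_le_sum (f := fun a => (f a - f (-(m • x) - a)) ^ 2) (fun _ _ => sq_nonneg _)
      (mem_univ x)
  calc (f x ^ 2) ^ m * (f x - f (-((m + 1) • x))) ^ 2
      ≤ (f x ^ 2) ^ m * reflectionDefect f (-(m • x)) := by gcongr
    _ = (∏ _ : Fin m, f x ^ 2) * reflectionDefect f (-∑ _ : Fin m, x) := by simp
    _ ≤ meanReflectionDefect f m :=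
        single_le_sum
          (f := fun c : Fin m → G => (∏ i, f (c i) ^ 2) * reflectionDefect f (-∑ i, c i))
          (fun c _ => mul_nonneg (prod_nonneg fun _ _ => sq_nonneg _) (reflectionDefect_nonneg f _))
          (mem_univ fun _ => x)

omit [AddCommGroup G] in
lemma quarter_le_sq_sub_of_concentrated (h1 : ∑ a, f a ^ 2 = 1) {x y : G} (hxy : x ≠ y)
    (hfx : 0 ≤ f x) (hx : 7 / 8 ≤ f x ^ 2) : 1 / 4 ≤ (f x - f y) ^ 2 := by
  classical
  have hpair : f x ^ 2 + f y ^ 2 ≤ 1 := by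
    rw [← h1, ← sum_pair (f := fun a => f a ^ 2) hxy]
    exact sum_le_univ_sum_of_nonneg fun _ => sq_nonneg _
  have hlower : 7 / 8 ≤ f x := by nlinarith
  have hupper : f y ≤ 3 / 8 := by nlinarith
  calc (1 / 4 : ℝ) = (7 / 8 - 3 / 8) ^ 2 := by norm_num
    _ ≤ (f x - f y) ^ 2 := by gcongr

lemma one_le_mul_meanReflectionDefect_of_concentrated (h1 : ∑ a, f a ^ 2 = 1) {m : ℕ} {x : G}
    (hx : (m + 3) • x ≠ 0) (hfx : 0 ≤ f x) (hmass : 7 / 8 ≤ f x ^ 2)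
    (hconc : 1 - f x ^ 2 ≤ 2 ^ 10 * meanTranslationDefect f) :
    1 ≤ 2 ^ 12 * (m + 3) * meanReflectionDefect f (m + 1) := by
  set E := meanReflectionDefect f (m + 1)
  have hE0 : 0 ≤ E := meanReflectionDefect_nonneg f _
  have hne : x ≠ -((m + 2) • x) := fun h => hx <| by
    rwa [succ_nsmul', ← eq_neg_iff_add_eq_zero]
  have hquarter : (f x ^ 2) ^ (m + 1) * (1 / 4) ≤ E := by
    calc (f x ^ 2) ^ (m + 1) * (1 / 4) ≤ (f x ^ 2) ^ (m + 1) * (f x - f (-((m + 2) • x))) ^ 2 := by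
          gcongr
          exact quarter_le_sq_sub_of_concentrated h1 hne hfx hmass
      _ ≤ E := pow_mul_sq_sub_le_meanReflectionDefect f (m + 1) x
  have hbernoulli : 1 - (m + 1) * (2 ^ 12 * E) ≤ (f x ^ 2) ^ (m + 1) := by
    have hmean : 1 - f x ^ 2 ≤ 2 ^ 12 * E := by
      linarith [meanTranslationDefect_le_four_mul h1 m]
    calc 1 - (m + 1) * (2 ^ 12 * E) ≤ 1 - (m + 1) * (1 - f x ^ 2) := by gcongr
      _ = 1 + (m + 1 : ℕ) * (f x ^ 2 - 1) := by push_cast; ring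
      _ ≤ (f x ^ 2) ^ (m + 1) := one_add_mul_sub_le_pow (by linarith) _
  linarith

end Concentrated

end Defects

section PrimeOrder

variable {p : ℕ} [Fact p.Prime] {f : ZMod p → ℝ}

lemma almostPeriods_eq_univ (h1 : ∑ a, f a ^ 2 = 1) {r : ℝ} (hr : 0 ≤ r) {x : ZMod p}
    (hmass : 2 / 3 + 2 * r < ∑ t ∈ almostPeriods f (r ^ 2 / 4), f (x + t) ^ 2)
    (hcard : 1 < #(almostPeriods f (r ^ 2 / 4))) : almostPeriods f (r ^ 2) = univ := by
  set A := almostPeriods f (r ^ 2 / 4)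
  set C := almostPeriods f (r ^ 2)
  have hAne : A.Nonempty := card_pos.mp (by lia)
  have hCpos : 0 < #C := card_pos.mpr ⟨0, zero_mem_almostPeriods (sq_nonneg r)⟩
  have hdoubling : min p (#A + #A - 1) ≤ #C := by
    refine (ZMod.cauchy_davenport Fact.out hAne hAne).trans (card_le_card ?_)
    have hadd := almostPeriods_add_subset (f := f) (r ^ 2 / 4)
    rwa [mul_div_cancel₀ (r ^ 2) four_ne_zero] at hadd
  have hcount : (∑ t ∈ A, f (x + t) ^ 2 - 2 * r) * #C ≤ #A := by
    simpa only [sum_map, card_map, addLeftEmbedding_apply] using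
      mul_card_almostPeriods_le_card h1 hr (A.map (addLeftEmbedding x))
  have hsmall : 2 * #C < 3 * #A := by
    have : (2 / 3 : ℝ) * #C < #A :=
      (mul_lt_mul_of_pos_right (by linarith) (Nat.cast_pos.mpr hCpos)).trans_le hcount
    exact_mod_cast (by linarith : (2 : ℝ) * #C < 3 * #A)
  refine eq_univ_of_card C ((card_le_univ C).antisymm ?_)
  rw [ZMod.card]
  lia

lemma concentrated_or_almostPeriods_eq_univ (h1 : ∑ a, f a ^ 2 = 1) {r : ℝ} (hr : 0 < r)
    (hD : meanTranslationDefect f < r ^ 2 / 4 * (1 / 3 - 2 * r)) :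
    (∃ x, r ^ 2 / 4 * (1 - f x ^ 2) ≤ meanTranslationDefect f) ∨
      almostPeriods f (r ^ 2) = univ := by
  obtain ⟨x, hx⟩ := exists_sum_mul_translationDefect_le h1
  have hmarkov := (mul_one_sub_sum_almostPeriods_le h1 (r ^ 2 / 4) x).trans hx
  rcases le_or_gt #(almostPeriods f (r ^ 2 / 4)) 1 with hcard | hcard
  · left
    have hzero : 0 ∈ almostPeriods f (r ^ 2 / 4) := zero_mem_almostPeriods (by positivity)
    have hsingleton : almostPeriods f (r ^ 2 / 4) = {0} :=
      eq_singleton_iff_unique_mem.mpr ⟨hzero, fun t ht => card_le_one.mp hcard t ht 0 hzero⟩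
    rw [hsingleton, sum_singleton, add_zero] at hmarkov
    exact ⟨x, hmarkov⟩
  · right
    have hmass := lt_of_mul_lt_mul_left (hmarkov.trans_lt hD) (by positivity)
    exact almostPeriods_eq_univ h1 hr.le (x := x) (by linarith) hcard

lemma one_le_mul_meanReflectionDefect_or_concentrated_or_almostPeriods_eq_univ {m : ℕ}
    (hpm : p.Coprime (m + 3)) (hf : ∀ a, 0 ≤ f a) (h1 : ∑ a, f a ^ 2 = 1) :
    1 ≤ 2 ^ 15 * (m + 3) * meanReflectionDefect f (m + 1) ∨
      1 - f 0 ^ 2 ≤ 2 ^ 12 * meanReflectionDefect f (m + 1) ∨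
        almostPeriods f ((1 / 16) ^ 2) = univ := by
  have hE : 0 ≤ meanReflectionDefect f (m + 1) := meanReflectionDefect_nonneg f _
  have hmE : 0 ≤ m * meanReflectionDefect f (m + 1) := by positivity
  have hDE := meanTranslationDefect_le_four_mul h1 m
  rcases le_or_gt (1 / 2 ^ 13) (meanTranslationDefect f) with hlarge | hsmall
  · exact .inl (by linarith)
  -- The radius `1 / 16` leaves room in both `2 * r < 1 / 3` and, for the uniform case, `8 * r < 1`.
  rcases concentrated_or_almostPeriods_eq_univ h1 (r := 1 / 16) (by norm_num)
    (by linarith) with ⟨x, hx⟩ | huniv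
  · rcases eq_or_ne x 0 with rfl | hx0
    · exact .inr (.inl (by linarith))
    · have hmx : (m + 3) • x ≠ 0 := by
        rw [nsmul_eq_mul]
        exact mul_ne_zero (ZMod.unitOfCoprime (m + 3) hpm.symm).ne_zero hx0
      have hone := one_le_mul_meanReflectionDefect_of_concentrated h1 hmx (hf x) (by linarith)
        (by linarith)
      exact .inl (by linarith)
  · exact .inr (.inr huniv)

lemma mul_min_one_le_mul_meanReflectionDefect {m : ℕ} (hpm : p.Coprime (m + 3))
    (hf : ∀ a, 0 ≤ f a) (h1 : ∑ a, f a ^ 2 = 1) {δ : ℝ} (hδ : 0 ≤ δ)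
    (hj : ∃ j, δ ≤ |p * f j ^ 2 - 1|) (h0 : δ ≤ p * (1 - f 0 ^ 2)) :
    δ * min δ 1 ≤ 2 ^ 15 * (m + 3) * p * meanReflectionDefect f (m + 1) := by
  set E := meanReflectionDefect f (m + 1)
  have hE : 0 ≤ E := meanReflectionDefect_nonneg f _
  have hpE : 0 ≤ p * E := by positivity
  have hmpE : 0 ≤ m * (p * E) := by positivity
  have hδmin : δ * min δ 1 ≤ δ := mul_le_of_le_one_right hδ (min_le_right _ _)
  rcases one_le_mul_meanReflectionDefect_or_concentrated_or_almostPeriods_eq_univ hpm hf h1 with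
    hlarge | hconc | huniv
  · calc δ * min δ 1 ≤ p * (1 - f 0 ^ 2) := hδmin.trans h0
      _ ≤ p * (2 ^ 15 * (m + 3) * E) := by
        gcongr
        exact (sub_le_self 1 (sq_nonneg _)).trans hlarge
      _ = 2 ^ 15 * (m + 3) * p * E := by ring
  · calc δ * min δ 1 ≤ p * (1 - f 0 ^ 2) := hδmin.trans h0
      _ ≤ p * (2 ^ 12 * E) := by gcongr
      _ ≤ 2 ^ 15 * (m + 3) * p * E := by linarith
  · obtain ⟨j, hj⟩ := hj
    have huniform := mul_min_one_le_of_almostPeriods_eq_univ h1 (by norm_num) (by norm_num) huniv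
      (hf j) hδ (by rwa [ZMod.card])
    rw [ZMod.card] at huniform
    have hpDE : p * meanTranslationDefect f ≤ p * (4 * E) := by
      gcongr
      exact meanTranslationDefect_le_four_mul h1 m
    linarith

end PrimeOrder

theorem power_sum_bound_general {d p : ℕ} [Fact p.Prime] (hd : 3 ≤ d) (hpd : p.Coprime d)
    {n : ZMod p → ℝ} (hn : ∀ j, 0 ≤ n j) (h1 : ∑ j, n j = 1) {δ : ℝ} (hδ : 0 ≤ δ)
    (hj : ∃ j, δ / p ≤ |n j - 1 / p|) (h0 : n 0 ≤ 1 - δ / p) :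
    ∑ a : Fin d → ZMod p with ∑ r, a r = 0, ∏ r, n (a r) ^ (((d : ℝ) - 1) / d) ≤
      1 - δ * min δ 1 / (2 ^ 15 * d ^ 2) / p := by
  obtain ⟨m, rfl⟩ := Nat.exists_eq_add_of_le' hd
  have hp : (0 : ℝ) < p := Nat.cast_pos.mpr (Fact.out : p.Prime).pos
  obtain ⟨f, hf, rfl⟩ : ∃ f : ZMod p → ℝ, (∀ a, 0 ≤ f a) ∧ n = fun a => f a ^ 2 :=
    ⟨fun a => √(n a), fun a => Real.sqrt_nonneg _, funext fun a => (Real.sq_sqrt (hn a)).symm⟩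
  have hdev : ∃ j, δ ≤ |p * f j ^ 2 - 1| := hj.imp fun j hj => by
    calc δ = p * (δ / p) := by field_simp
      _ ≤ p * |f j ^ 2 - 1 / p| := by gcongr
      _ = |p * f j ^ 2 - 1| := by
        rw [← abs_of_pos hp, ← abs_mul, abs_of_pos hp, mul_sub, mul_one_div_cancel hp.ne']
  have hzero : δ ≤ p * (1 - f 0 ^ 2) := (div_le_iff₀' hp).mp (le_sub_comm.mp h0)
  have hdefect := mul_min_one_le_mul_meanReflectionDefect hpd hf h1 hδ hdev hzero
  refine (sum_zeroSum_prod_rpow_le hf h1 (m + 1)).trans (sub_le_sub_left ?_ 1)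
  rw [div_div, div_le_div_iff₀ (by positivity) (by positivity)]
  push_cast
  linear_combination (m + 3 : ℝ) * hdefect

/-- For `d ≥ 3` there is `δ₀ > 0` such that for all `δ ∈ (0, δ₀)` there is `c(δ) > 0` with:
for every prime `p` with `gcd(p,d) = 1` and every probability vector `𝔫` on `{0,…,p-1}`,
if `max_j |𝔫_j - 1/p| > δ/p` and `𝔫_0 < 1 - δ/p`, then
`Σ_{a ∈ Z_{d,p}} ∏_{r=1}^d 𝔫_{a_r}^{(d-1)/d} ≤ 1 - c(δ)/p`. -/
theorem power_sum_bound (d : ℕ) (hd : 3 ≤ d) :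
    ∃ δ₀ : ℝ, 0 < δ₀ ∧ ∀ δ : ℝ, 0 < δ → δ < δ₀ → ∃ c : ℝ, 0 < c ∧
      ∀ (p : ℕ) [Fact p.Prime], Nat.gcd p d = 1 →
        ∀ 𝔫 : ZMod p → ℝ, (∀ j, 0 ≤ 𝔫 j) → (∑ j, 𝔫 j) = 1 →
        (∃ j, δ / p < |𝔫 j - 1 / p|) → 𝔫 0 < 1 - δ / p →
        (∑ a ∈ Finset.univ.filter (fun a : Fin d → ZMod p => ∑ r, a r = 0),
            ∏ r : Fin d, (𝔫 (a r)) ^ (((d : ℝ) - 1) / d))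
          ≤ 1 - c / p := by
  refine ⟨1, one_pos, fun δ hδ _ => ⟨δ * min δ 1 / (2 ^ 15 * d ^ 2), by positivity, ?_⟩⟩
  exact fun p _ hpd n hn h1 hj h0 =>
    power_sum_bound_general hd hpd hn h1 hδ.le (hj.imp fun _ => le_of_lt) h0.le
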